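/- If equations (E1), (E2) and (E3) hold on I, then 2 α₁'(s) α₂'(s) cot(2α₁(s)) = 2 − α₁'(s)² for all s ∈ I; in particular α₁'(s) ≠ 0 and α₂'(s) ≠ 0 for every s ∈ I. -/

import Mathlib

/-!
Subtracting (E3) from (E2) gives `α₁'' = α₁' α₂'`, since `tan + cot = 1 / (sin cos) ≠ 0`; hence
`λ = -2 (α₂')²`, and (E1) together with unit speed becomes `α₂'' + 2 = 2 α₁' α₂' cot (2 α₁)`.
Differentiating the unit speed condition gives `α₂' (α₂'' + (α₁')²) = 0`, so it remains to see that
`α₂'` has no zero. At a zero, `α₂'' = -2` by the reduced (E1), so the zero is isolated; then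
`α₂'' = -(α₁')²` on a punctured neighbourhood and, by continuity, at the zero, where
`(α₁')² = 1`: a contradiction. Finally `α₁' = 0` would turn the identity into `0 = 2`.
-/

theorem tan_add_cot_ne_zero {x : ℝ} (h : Real.sin x * Real.cos x ≠ 0) :
    Real.tan x + Real.cot x ≠ 0 := by
  have hs := left_ne_zero_of_mul h
  have hc := right_ne_zero_of_mul h
  have key : (Real.tan x + Real.cot x) * (Real.sin x * Real.cos x) = 1 := by
    rw [Real.tan_eq_sin_div_cos, Real.cot_eq_cos_div_sin]
    field_simp
    exact Real.sin_sq_add_cos_sq x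
  exact left_ne_zero_of_mul (key.trans_ne one_ne_zero)

theorem two_mul_cot_two_mul {x : ℝ} (h : Real.sin x * Real.cos x ≠ 0) :
    2 * Real.cot (2 * x) = Real.cot x - Real.tan x := by
  have hs := left_ne_zero_of_mul h
  have hc := right_ne_zero_of_mul h
  rw [Real.tan_eq_sin_div_cos, Real.cot_eq_cos_div_sin, Real.cot_eq_cos_div_sin,
    Real.sin_two_mul, Real.cos_two_mul']
  field_simp

/-- Suppose `g (g' + f) = 0` near `s`. If `g' s ≠ 0`, then `g` has no zero on a punctured
neighbourhood of `s`, so `g' = -f` there, and by continuity also at `s`, even when `g s = 0`. -/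
theorem deriv_eq_neg_of_zero {f g : ℝ → ℝ} {s : ℝ} (hf : ContinuousAt f s)
    (hg : DifferentiableAt ℝ g s) (hg' : ContinuousAt (deriv g) s)
    (hrel : ∀ᶠ t in nhds s, g t * (deriv g t + f t) = 0) (h0 : deriv g s ≠ 0) :
    deriv g s = -f s := by
  have hne : ∀ᶠ t in nhdsWithin s {s}ᶜ, g t ≠ 0 := hg.hasDerivAt.eventually_ne h0
  have heq : ∀ᶠ t in nhdsWithin s {s}ᶜ, deriv g t = -f t := by
    filter_upwards [hne, hrel.filter_mono nhdsWithin_le_nhds] with t h1 h2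
    exact eq_neg_of_add_eq_zero_left ((mul_eq_zero.mp h2).resolve_left h1)
  have hlim := (hg'.tendsto.mono_left (nhdsWithin_le_nhds (s := {s}ᶜ))).congr' heq
  exact tendsto_nhds_unique hlim (hf.neg.tendsto.mono_left nhdsWithin_le_nhds)

/-- if (E1), (E2) and (E3) hold on `I`, then
`2 α₁' α₂' cot(2α₁) = 2 − (α₁')²` on `I`; in particular `α₁' ≠ 0` and `α₂' ≠ 0` on `I`. -/
theorem stmt10
    (I : Set ℝ) (hIopen : IsOpen I) (hIne : I.Nonempty) (hIconn : I.OrdConnected)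
    (α₁ α₂ lam : ℝ → ℝ)
    (hα₁ : ContDiff ℝ (⊤ : ℕ∞) α₁) (hα₂ : ContDiff ℝ (⊤ : ℕ∞) α₂) (hlam : ContDiff ℝ (⊤ : ℕ∞) lam)
    (hunit : ∀ s ∈ I, (deriv α₁ s) ^ 2 + (deriv α₂ s) ^ 2 = 1)
    (hsc : ∀ s ∈ I, Real.sin (α₁ s) * Real.cos (α₁ s) ≠ 0)
    (hE1 : ∀ s ∈ I, deriv (deriv α₂) s
        + deriv (deriv α₁) s * (Real.tan (α₁ s) - Real.cot (α₁ s))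
        + 2 * (deriv α₁ s) ^ 2 = lam s)
    (hE2 : ∀ s ∈ I, (deriv (deriv α₁) s - deriv α₁ s * deriv α₂ s) * Real.tan (α₁ s)
        - 2 * (deriv α₂ s) ^ 2 = lam s)
    (hE3 : ∀ s ∈ I, (deriv α₁ s * deriv α₂ s - deriv (deriv α₁) s) * Real.cot (α₁ s)
        - 2 * (deriv α₂ s) ^ 2 = lam s) :
    ∀ s ∈ I, 2 * deriv α₁ s * deriv α₂ s * Real.cot (2 * α₁ s) = 2 - (deriv α₁ s) ^ 2 ∧
      deriv α₁ s ≠ 0 ∧ deriv α₂ s ≠ 0 := by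
  have hd₁ : ContDiff ℝ 1 (deriv α₁) := by
    exact_mod_cast contDiff_infty.mp (contDiff_infty_iff_deriv.mp hα₁).2 1
  have hd₂ : ContDiff ℝ 1 (deriv α₂) := by
    exact_mod_cast contDiff_infty.mp (contDiff_infty_iff_deriv.mp hα₂).2 1
  have hdd₁ := hd₁.differentiable one_ne_zero
  have hdd₂ := hd₂.differentiable one_ne_zero
  have hA : ∀ s ∈ I, deriv (deriv α₁) s = deriv α₁ s * deriv α₂ s := by
    intro s hs
    have h : (deriv (deriv α₁) s - deriv α₁ s * deriv α₂ s)
        * (Real.tan (α₁ s) + Real.cot (α₁ s)) = 0 := by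
      linear_combination hE2 s hs - hE3 s hs
    exact sub_eq_zero.mp ((mul_eq_zero.mp h).resolve_right (tan_add_cot_ne_zero (hsc s hs)))
  have hB : ∀ s ∈ I, deriv α₂ s * (deriv (deriv α₂) s + (deriv α₁ s) ^ 2) = 0 := by
    intro s hs
    have h1 := ((hdd₁ s).hasDerivAt.pow 2).add ((hdd₂ s).hasDerivAt.pow 2)
    have h2 : HasDerivAt (deriv α₁ ^ 2 + deriv α₂ ^ 2) 0 s := by
      refine (hasDerivAt_const s (1 : ℝ)).congr_of_eventuallyEq ?_
      filter_upwards [hIopen.mem_nhds hs] with t ht using hunit t ht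
    have h3 := h1.unique h2
    norm_num at h3
    rw [hA s hs] at h3
    linear_combination h3 / 2
  have hC : ∀ s ∈ I,
      2 * deriv α₁ s * deriv α₂ s * Real.cot (2 * α₁ s) = deriv (deriv α₂) s + 2 := by
    intro s hs
    have h1 := hE1 s hs
    have h2 := hE2 s hs
    rw [hA s hs] at h1 h2
    linear_combination deriv α₁ s * deriv α₂ s * two_mul_cot_two_mul (hsc s hs)
      - h1 + h2 + 2 * hunit s hs
  have hD : ∀ s ∈ I, deriv α₂ s ≠ 0 := by
    intro s hs h0
    have hc := hC s hs
    have hu := hunit s hs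
    rw [h0] at hc hu
    have h2 : deriv (deriv α₂) s = -2 := by linear_combination -hc
    have h3 := deriv_eq_neg_of_zero (f := fun t => deriv α₁ t ^ 2)
      (hd₁.continuous.pow 2).continuousAt (hdd₂ s)
      (hd₂.continuous_deriv le_rfl).continuousAt
      (Filter.eventually_of_mem (hIopen.mem_nhds hs) hB) (by rw [h2]; norm_num)
    linarith
  intro s hs
  have hb := (mul_eq_zero.mp (hB s hs)).resolve_left (hD s hs)
  have hmain : 2 * deriv α₁ s * deriv α₂ s * Real.cot (2 * α₁ s) = 2 - (deriv α₁ s) ^ 2 := by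
    linear_combination hC s hs + hb
  refine ⟨hmain, fun h => ?_, hD s hs⟩
  rw [h] at hmain
  norm_num at hmain
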